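/- Let b₁ and b₁' be nonzero integers. If g_{(b₁,0)}(u) = g_{(b₁',0)}(u) for every real u, then b₁ = b₁'. (That is, the map b ↦ S_{ψ_b} is injective on the elements b = (b₁,0) of subtype (1)α.) -/

import Mathlib

noncomputable section

/-- `λ = τ - kσ`, the area parameter of the second section of the Hirzebruch surface. -/
def lamH (k : ℤ) (σ τ : ℝ) : ℝ := τ - (k : ℝ) * σ

/-- First coordinate of the centroid of the moment trapezoid with vertices
`(0,0), (σ,0), (0,τ), (σ,λ)`. -/
def c₁H (k : ℤ) (σ τ : ℝ) : ℝ := σ * (τ + 2 * lamH k σ τ) / (3 * (τ + lamH k σ τ))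

/-- Second coordinate of the centroid of the moment trapezoid. -/
def c₂H (k : ℤ) (σ τ : ℝ) : ℝ :=
  (τ ^ 2 + τ * lamH k σ τ + lamH k σ τ ^ 2) / (3 * (τ + lamH k σ τ))

/-- `q_b = c₁ b₁ + c₂ b₂`. -/
def qH (k : ℤ) (σ τ : ℝ) (b₁ b₂ : ℤ) : ℝ :=
  c₁H k σ τ * (b₁ : ℝ) + c₂H k σ τ * (b₂ : ℝ)

/-- `g_b(u) = u² S_{ψ_b}(u)` for `b = (b₁, 0)` with `b₁ ≠ 0` (subtype (1)α). -/
def gH (k : ℤ) (σ τ : ℝ) (b₁ : ℤ) (u : ℝ) : ℝ :=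
  Real.exp (qH k σ τ b₁ 0 * u) *
    (τ * u / (b₁ : ℝ) - (k : ℝ) / (b₁ : ℝ) ^ 2
      - Real.exp (-(σ * (b₁ : ℝ) * u)) *
          (lamH k σ τ * u / (b₁ : ℝ) - (k : ℝ) / (b₁ : ℝ) ^ 2))

/-- `h_b(u) = u² S_{ψ_b}(u)` for `b = (0, b₂)` with `b₂ ≠ 0` (first kind of subtype (1)β). -/
def hH (k : ℤ) (σ τ : ℝ) (b₂ : ℤ) (u : ℝ) : ℝ :=
  Real.exp (qH k σ τ 0 b₂ * u) *
    (Real.exp (-(τ * (b₂ : ℝ) * u)) / ((k : ℝ) * (b₂ : ℝ) ^ 2)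
      - Real.exp (-(lamH k σ τ * (b₂ : ℝ) * u)) / ((k : ℝ) * (b₂ : ℝ) ^ 2)
      + σ * u / (b₂ : ℝ))

/-- `j_b(u) = u² S_{ψ_b}(u)` for `b = (k b₂, b₂)` with `b₂ ≠ 0` (second kind of
subtype (1)β). -/
def jH (k : ℤ) (σ τ : ℝ) (b₂ : ℤ) (u : ℝ) : ℝ :=
  Real.exp (qH k σ τ (k * b₂) b₂ * u) *
    (1 / ((k : ℝ) * (b₂ : ℝ) ^ 2)
      - Real.exp (-(σ * (k : ℝ) * (b₂ : ℝ) * u)) / ((k : ℝ) * (b₂ : ℝ) ^ 2)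
      - σ * u * Real.exp (-(τ * (b₂ : ℝ) * u)) / (b₂ : ℝ))

end

/-!
Each `g_b` is a rescaling of `g = g_1`, namely `g_b(u) = b⁻² g(b u)`, so the fifth derivative of
`g_b` at `0` is `b³ g⁽⁵⁾(0)`. Since `g(v) = v² ∫∫ exp((c₁ - x) v) dx dy` over the moment trapezoid,
`g⁽⁵⁾(0)` is `-20` times the third moment of the trapezoid about its centroid in the direction `x`.
That moment has the sign of `k`, so `b³`, and with it `b`, is determined by `g_b`.
-/

section Calculus

lemma hasDerivAt_affine_mul_exp (A B α u : ℝ) :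
    HasDerivAt (fun v : ℝ ↦ (A * v + B) * Real.exp (α * v))
      ((α * A * u + (A + α * B)) * Real.exp (α * u)) u := by
  have affine : HasDerivAt (fun v : ℝ ↦ A * v + B) A u := by
    simpa using ((hasDerivAt_id' u).const_mul A).add_const B
  have exponential : HasDerivAt (fun v : ℝ ↦ Real.exp (α * v)) (Real.exp (α * u) * α) u := by
    simpa using ((hasDerivAt_id' u).const_mul α).exp
  exact (affine.mul exponential).congr_deriv (by ring)

lemma iteratedDeriv_affine_mul_exp (A B α : ℝ) (n : ℕ) :
    iteratedDeriv n (fun v : ℝ ↦ (A * v + B) * Real.exp (α * v)) =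
      fun v ↦ (α ^ n * A * v + (n * α ^ (n - 1) * A + α ^ n * B)) * Real.exp (α * v) := by
  induction n with
  | zero => simp
  | succ n ih =>
    have pow_pred : n * α ^ (n - 1) * α = n * α ^ n := by
      rcases n with _ | n
      · simp
      · rw [Nat.add_sub_cancel, pow_succ, mul_assoc]
    ext v
    rw [iteratedDeriv_succ, ih, (hasDerivAt_affine_mul_exp _ _ _ v).deriv, Nat.add_sub_cancel]
    push_cast
    linear_combination A * Real.exp (α * v) * pow_pred

lemma eq_of_inv_pow_smul_comp_mul_eq {E : Type*} [NormedAddCommGroup E] [NormedSpace ℝ E]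
    {f : ℝ → E} {m j : ℕ} (hf : ContDiff ℝ (m + j : ℕ) f) (hj : Odd j)
    (hf₀ : iteratedDeriv (m + j) f 0 ≠ 0) {a b : ℝ} (ha : a ≠ 0) (hb : b ≠ 0)
    (h : ∀ u, (a ^ m)⁻¹ • f (a * u) = (b ^ m)⁻¹ • f (b * u)) : a = b := by
  have iteratedDeriv_rescale (c : ℝ) (hc : c ≠ 0) :
      iteratedDeriv (m + j) (fun u ↦ (c ^ m)⁻¹ • f (c * u)) 0 =
        c ^ j • iteratedDeriv (m + j) f 0 := by
    rw [iteratedDeriv_fun_const_smul_field, iteratedDeriv_comp_const_smul hf]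
    simp only [mul_zero, smul_smul, pow_add, inv_mul_cancel_left₀ (pow_ne_zero m hc)]
  have pow_smul_eq : a ^ j • iteratedDeriv (m + j) f 0 = b ^ j • iteratedDeriv (m + j) f 0 := by
    rw [← iteratedDeriv_rescale a ha, ← iteratedDeriv_rescale b hb, funext h]
  exact hj.pow_inj.mp (smul_left_injective ℝ hf₀ pow_smul_eq)

end Calculus

section Hirzebruch

variable (k : ℤ) (σ τ : ℝ)

lemma contDiff_gH (b : ℤ) {n : WithTop ℕ∞} : ContDiff ℝ n (gH k σ τ b) := by
  unfold gH
  fun_prop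

lemma gH_eq_inv_sq_smul_gH_one {b : ℤ} (hb : b ≠ 0) (u : ℝ) :
    gH k σ τ b u = ((b : ℝ) ^ 2)⁻¹ • gH k σ τ 1 (b * u) := by
  have hb_real : (b : ℝ) ≠ 0 := Int.cast_ne_zero.mpr hb
  simp only [gH, qH, Int.cast_one, Int.cast_zero, mul_one, mul_zero, add_zero, smul_eq_mul,
    mul_assoc]
  field_simp

lemma gH_one_eq_add :
    gH k σ τ 1 =
      (fun v : ℝ ↦ (τ * v + -k) * Real.exp (c₁H k σ τ * v)) +
        fun v : ℝ ↦ (-lamH k σ τ * v + k) * Real.exp ((c₁H k σ τ - σ) * v) := by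
  ext v
  have exp_split : Real.exp ((c₁H k σ τ - σ) * v) =
      Real.exp (c₁H k σ τ * v) * Real.exp (-(σ * v)) := by
    rw [← Real.exp_add]
    ring_nf
  simp only [gH, qH, Int.cast_one, Int.cast_zero, mul_one, mul_zero, add_zero, Pi.add_apply,
    exp_split]
  ring

lemma iteratedDeriv_gH_one_zero (n : ℕ) :
    iteratedDeriv n (gH k σ τ 1) 0 =
      n * τ * c₁H k σ τ ^ (n - 1) - k * c₁H k σ τ ^ n
        - n * lamH k σ τ * (c₁H k σ τ - σ) ^ (n - 1) + k * (c₁H k σ τ - σ) ^ n := by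
  rw [gH_one_eq_add, iteratedDeriv_add (by fun_prop) (by fun_prop)]
  simp only [iteratedDeriv_affine_mul_exp, mul_zero, Real.exp_zero, mul_one, zero_add]
  ring

variable {k σ τ}

lemma iteratedDeriv_five_gH_one_zero (hsum : τ + lamH k σ τ ≠ 0) :
    iteratedDeriv 5 (gH k σ τ 1) 0 =
      -(2 / 27) * (k * σ ^ 5) * (τ ^ 2 + 7 * τ * lamH k σ τ + lamH k σ τ ^ 2)
        / (τ + lamH k σ τ) ^ 2 := by
  obtain ⟨s, hs⟩ : ∃ s, τ + lamH k σ τ = s := ⟨_, rfl⟩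
  have lam_eq : lamH k σ τ = (s - k * σ) / 2 := by
    rw [← hs, lamH]
    ring
  have τ_eq : τ = (s + k * σ) / 2 := by linear_combination hs - lam_eq
  rw [hs] at hsum
  rw [iteratedDeriv_gH_one_zero, c₁H, hs, lam_eq, τ_eq]
  simp only [Nat.reduceSub, Nat.cast_ofNat]
  field_simp
  ring

lemma iteratedDeriv_five_gH_one_zero_ne_zero (hk : k ≠ 0) (hσ : σ ≠ 0) (hτ : 0 < τ)
    (hlam : 0 < lamH k σ τ) : iteratedDeriv 5 (gH k σ τ 1) 0 ≠ 0 := by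
  have quadratic_pos : 0 < τ ^ 2 + 7 * τ * lamH k σ τ + lamH k σ τ ^ 2 := by positivity
  have sum_ne_zero : τ + lamH k σ τ ≠ 0 := by positivity
  rw [iteratedDeriv_five_gH_one_zero sum_ne_zero]
  simp [hk, hσ, quadratic_pos.ne', sum_ne_zero]

end Hirzebruch

/-- Proposition 3.13 (PropinyecS1a) of the paper: the map `b ↦ S_{ψ_b}` is injective on the
elements `b = (b₁, 0)` of subtype (1)α. -/
theorem hirzebruch_subtype1alpha_injective
    (k : ℤ) (hk : k ≠ 0) (σ τ : ℝ) (hσ : 0 < σ) (hτ : 0 < τ) (hlam : 0 < lamH k σ τ)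
    (b₁ b₁' : ℤ) (hb : b₁ ≠ 0) (hb' : b₁' ≠ 0)
    (h : ∀ u : ℝ, gH k σ τ b₁ u = gH k σ τ b₁' u) :
    b₁ = b₁' := by
  have rescaled (u : ℝ) : ((b₁ : ℝ) ^ 2)⁻¹ • gH k σ τ 1 (b₁ * u) =
      ((b₁' : ℝ) ^ 2)⁻¹ • gH k σ τ 1 (b₁' * u) := by
    rw [← gH_eq_inv_sq_smul_gH_one k σ τ hb, ← gH_eq_inv_sq_smul_gH_one k σ τ hb', h]
  have cast_eq : (b₁ : ℝ) = b₁' :=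
    eq_of_inv_pow_smul_comp_mul_eq (m := 2) (j := 3) (contDiff_gH k σ τ 1) (by decide)
      (iteratedDeriv_five_gH_one_zero_ne_zero hk hσ.ne' hτ hlam)
      (Int.cast_ne_zero.mpr hb) (Int.cast_ne_zero.mpr hb') rescaled
  exact Int.cast_injective cast_eq
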